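/- Let D ≥ 1, let q and q' be coprime integers with q > 1, q' > 1 and q ≠ q', and let σ and σ' be arbitrary permutations of {1,…,D}. Then M(q, σ) and M(q', σ') are left coprime. -/

import Mathlib

/-- The `D × D` integer matrix `M(q, σ)`: diagonal entries all `q`, entry
`(σ(k), σ(k+1))` equal to `1` for `k = 1, …, D-1`, all other entries `0`. -/
def Mmat {D : ℕ} (q : ℤ) (σ : Equiv.Perm (Fin D)) : Matrix (Fin D) (Fin D) ℤ :=
  Matrix.diagonal (fun _ => q) +
    ∑ k : Fin (D - 1),
      Matrix.single (σ ⟨(k : ℕ), by have := k.isLt; omega⟩)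
        (σ ⟨(k : ℕ) + 1, by have := k.isLt; omega⟩) (1 : ℤ)

/-- Two square integer matrices are left coprime if every common left divisor of
them is unimodular. -/
def LeftCoprime {D : ℕ} (M N : Matrix (Fin D) (Fin D) ℤ) : Prop :=
  ∀ A : Matrix (Fin D) (Fin D) ℤ, A.det ≠ 0 →
    (∃ B, M = A * B) → (∃ C, N = A * C) → (A.det = 1 ∨ A.det = -1)

/-- `A` is a right multiple of `M` if `A = M * P` for some nonsingular integer
matrix `P`. -/
def IsRightMultiple {D : ℕ} (A M : Matrix (Fin D) (Fin D) ℤ) : Prop :=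
  ∃ P : Matrix (Fin D) (Fin D) ℤ, P.det ≠ 0 ∧ A = M * P

/-! Writing `d = det A`, a common left divisor `A` of `M` and `N` satisfies `d ∣ det M` and
`d ∣ det N`, so `d` is a unit once these two determinants are coprime. Listing rows and columns in
the order `σ(1), …, σ(D)` turns `M(q, σ)` into the Jordan block with eigenvalue `q`, hence
`det M(q, σ) = q ^ D`, and powers of coprime integers are coprime. -/

theorem leftCoprime_of_isCoprime_det {D : ℕ} {M N : Matrix (Fin D) (Fin D) ℤ}
    (h : IsCoprime M.det N.det) : LeftCoprime M N := by
  intro A _ hM hN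
  have hdvdM : A.det ∣ M.det := map_dvd Matrix.detMonoidHom hM
  have hdvdN : A.det ∣ N.det := map_dvd Matrix.detMonoidHom hN
  exact Int.isUnit_iff.mp (h.isUnit_of_dvd' hdvdM hdvdN)

section Mmat

variable {D : ℕ} (q : ℤ) (σ : Equiv.Perm (Fin D))

theorem Mmat_apply_perm_apply (i j : Fin D) :
    Mmat q σ (σ i) (σ j) = (if i = j then q else 0) + if (i : ℕ) + 1 = j then 1 else 0 := by
  have superdiagonal :
      (∑ k : Fin (D - 1), Matrix.single (σ ⟨(k : ℕ), by omega⟩) (σ ⟨(k : ℕ) + 1, by omega⟩) (1 : ℤ))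
        (σ i) (σ j) = if (i : ℕ) + 1 = j then 1 else 0 := by
    simp only [Matrix.sum_apply, Matrix.single_apply, σ.injective.eq_iff, Fin.ext_iff]
    split_ifs with hij
    · rw [Finset.sum_eq_single_of_mem ⟨(i : ℕ), by omega⟩ (Finset.mem_univ _)]
      · exact if_pos ⟨rfl, hij⟩
      · exact fun k _ hk => if_neg fun h => hk (Fin.ext h.1)
    · exact Finset.sum_eq_zero fun k _ => if_neg (by omega)
  simp only [Mmat, Matrix.add_apply, superdiagonal, Matrix.diagonal_apply, σ.injective.eq_iff]

theorem isUpperTriangular_Mmat_submatrix : ((Mmat q σ).submatrix σ σ).IsUpperTriangular := by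
  intro i j (hji : j < i)
  rw [Matrix.submatrix_apply, Mmat_apply_perm_apply, if_neg hji.ne', if_neg (by omega), add_zero]

theorem det_Mmat : (Mmat q σ).det = q ^ D := by
  calc (Mmat q σ).det = ((Mmat q σ).submatrix σ σ).det :=
        (Matrix.det_submatrix_equiv_self σ _).symm
    _ = ∏ i, Mmat q σ (σ i) (σ i) :=
        Matrix.det_of_isUpperTriangular (isUpperTriangular_Mmat_submatrix q σ)
    _ = q ^ D := by simp [Mmat_apply_perm_apply]

end Mmat

theorem stmt_7_general {D : ℕ} {q q' : ℤ} (hcop : IsCoprime q q') (σ σ' : Equiv.Perm (Fin D)) :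
    LeftCoprime (Mmat q σ) (Mmat q' σ') := by
  apply leftCoprime_of_isCoprime_det
  rw [det_Mmat, det_Mmat]
  exact hcop.pow

/-- for coprime `q, q' > 1` with `q ≠ q'` and arbitrary permutations
`σ, σ'`, the matrices `M(q, σ)` and `M(q', σ')` are left coprime. -/
theorem stmt_7 (D : ℕ) (hD : 1 ≤ D) (q q' : ℤ) (hq : 1 < q) (hq' : 1 < q')
    (hne : q ≠ q') (hcop : IsCoprime q q') (σ σ' : Equiv.Perm (Fin D)) :
    LeftCoprime (Mmat q σ) (Mmat q' σ') :=
  stmt_7_general hcop σ σ'
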